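/- Any nondegenerate m×n bimatrix game has a finite and odd number of Nash equilibria; in particular, at least one Nash equilibrium exists. -/

import Mathlib

open Matrix
open scoped Classical

noncomputable section

def IsMixed {ι : Type*} [Fintype ι] (x : ι → ℝ) : Prop :=
  (∀ i, 0 ≤ x i) ∧ ∑ i, x i = 1

def IsNash {ι κ : Type*} [Fintype ι] [Fintype κ]
    (A B : Matrix ι κ ℝ) (x : ι → ℝ) (y : κ → ℝ) : Prop :=
  IsMixed x ∧ IsMixed y ∧
    (∀ x' : ι → ℝ, IsMixed x' → x' ⬝ᵥ (A *ᵥ y) ≤ x ⬝ᵥ (A *ᵥ y)) ∧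
    (∀ y' : κ → ℝ, IsMixed y' → x ⬝ᵥ (B *ᵥ y') ≤ x ⬝ᵥ (B *ᵥ y))

def supp {ι : Type*} [Fintype ι] (x : ι → ℝ) : Finset ι :=
  Finset.univ.filter fun i => 0 < x i

def bestresp1 {ι κ : Type*} [Fintype ι] [Fintype κ] (A : Matrix ι κ ℝ) (y : κ → ℝ) :
    Finset ι :=
  Finset.univ.filter fun i => ∀ k, (A *ᵥ y) k ≤ (A *ᵥ y) i

def bestresp2 {ι κ : Type*} [Fintype ι] [Fintype κ] (B : Matrix ι κ ℝ) (x : ι → ℝ) :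
    Finset κ :=
  Finset.univ.filter fun j => ∀ k, (Bᵀ *ᵥ x) k ≤ (Bᵀ *ᵥ x) j

def Nondegenerate {ι κ : Type*} [Fintype ι] [Fintype κ] (A B : Matrix ι κ ℝ) : Prop :=
  (∀ x : ι → ℝ, IsMixed x → (bestresp2 B x).card ≤ (supp x).card) ∧
  (∀ y : κ → ℝ, IsMixed y → (bestresp1 A y).card ≤ (supp y).card)

section Abstract

variable {J : Type} [Fintype J] (a : J × Bool → (J → ℝ) →ₗ[ℝ] ℝ) (b : J × Bool → ℝ)

/-- feasible points -/
def Feas (z : J → ℝ) : Prop := ∀ i, a i z ≤ b i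

/-- tight constraints -/
def Tight (z : J → ℝ) : Finset (J × Bool) := Finset.univ.filter fun i => a i z = b i

lemma mem_Tight {z : J → ℝ} {i : J × Bool} : i ∈ Tight a b z ↔ a i z = b i := by
  simp [Tight]

lemma ray_lemma (hbd : ∀ d : J → ℝ, d ≠ 0 → ∃ i, 0 < a i d) {z d : J → ℝ}
    (hz : Feas a b z) (hd : d ≠ 0) (hT : ∀ i ∈ Tight a b z, a i d ≤ 0) :
    ∃ t : ℝ, 0 < t ∧ Feas a b (z + t • d) ∧ ∃ i, 0 < a i d ∧ a i (z + t • d) = b i := by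
  obtain ⟨i0, hi0⟩ := hbd d hd
  obtain ⟨i, hi, hmin⟩ := Finset.exists_min_image (Finset.univ.filter fun i => 0 < a i d)
    (fun i => (b i - a i z) / a i d) ⟨i0, by simpa using hi0⟩
  simp only [Finset.mem_filter, Finset.mem_univ, true_and] at hi hmin
  have hlt : a i z < b i := by
    refine lt_of_le_of_ne (hz i) fun h => ?_
    exact absurd (hT i ((mem_Tight a b).2 h)) (not_le.2 hi)
  refine ⟨(b i - a i z) / a i d, div_pos (by linarith) hi, fun j => ?_, i, hi, ?_⟩
  · have hpos : 0 < (b i - a i z) / a i d := div_pos (by linarith) hi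
    simp only [map_add, map_smul, smul_eq_mul]
    by_cases hj : 0 < a j d
    · have := hmin j hj
      rw [le_div_iff₀ hj] at this
      linarith
    · have := hz j
      nlinarith [not_lt.1 hj]
  · simp only [map_add, map_smul, smul_eq_mul]
    field_simp
    ring

/-- restriction of constraints to a set -/
def LTm (T : Finset (J × Bool)) : (J → ℝ) →ₗ[ℝ] (T → ℝ) := LinearMap.pi fun i => a i.1

lemma LT_apply (T : Finset (J × Bool)) (d : J → ℝ) (i : T) : LTm a T d i = a i.1 d := rfl

lemma LT_mono {T T' : Finset (J × Bool)} (h : T ⊆ T')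
    (hs : Function.Surjective (LTm a T')) : Function.Surjective (LTm a T) := by
  intro f
  obtain ⟨d, hd⟩ := hs (fun i => if hi : i.1 ∈ T then f ⟨i.1, hi⟩ else 0)
  refine ⟨d, ?_⟩
  ext i
  have := congrFun hd ⟨i.1, h i.2⟩
  simpa [LT_apply] using this

lemma LT_surj (hbd : ∀ d : J → ℝ, d ≠ 0 → ∃ i, 0 < a i d)
    (hnd : ∀ z, Feas a b z → (Tight a b z).card ≤ Fintype.card J) :
    ∀ k : ℕ, ∀ z, Feas a b z → Fintype.card J ≤ (Tight a b z).card + k →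
      Function.Surjective (LTm a (Tight a b z)) := by
  have key : ∀ z, Feas a b z → ¬ Function.Surjective (LTm a (Tight a b z)) →
      ∃ z', Feas a b z' ∧ Tight a b z ⊂ Tight a b z' := by
    intro z hz hs
    have hni : ¬ Function.Injective (LTm a (Tight a b z)) := by
      intro hi
      have h1 := LinearMap.finrank_le_finrank_of_injective hi
      simp only [Module.finrank_fintype_fun_eq_card, Fintype.card_coe] at h1
      have h2 := hnd z hz
      refine hs ((LinearMap.injective_iff_surjective_of_finrank_eq_finrank ?_).1 hi)
      simp only [Module.finrank_fintype_fun_eq_card, Fintype.card_coe]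
      omega
    have : ∃ d, d ≠ 0 ∧ LTm a (Tight a b z) d = 0 := by
      by_contra hcon
      push Not at hcon
      apply hni
      rw [injective_iff_map_eq_zero]
      intro d hd
      by_contra h
      exact hcon d h hd
    obtain ⟨d, hd0, hd⟩ := this
    have hd' : ∀ i ∈ Tight a b z, a i d = 0 := fun i hi => congrFun hd ⟨i, hi⟩
    obtain ⟨t, ht, hF, i, hi, hi'⟩ := ray_lemma a b hbd hz hd0 (fun i hi => (hd' i hi).le)
    refine ⟨_, hF, ?_⟩
    rw [Finset.ssubset_iff_of_subset]
    · refine ⟨i, (mem_Tight a b).2 hi', fun h => ?_⟩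
      rw [hd' i h] at hi
      exact lt_irrefl _ hi
    · intro j hj
      rw [mem_Tight]
      simp [hd' j hj, (mem_Tight a b).1 hj]
  intro k
  induction k with
  | zero =>
    intro z hz hk
    by_contra hs
    obtain ⟨z', hz', hss⟩ := key z hz hs
    have := Finset.card_lt_card hss
    have := hnd z' hz'
    omega
  | succ k ih =>
    intro z hz hk
    by_contra hs
    obtain ⟨z', hz', hss⟩ := key z hz hs
    have := Finset.card_lt_card hss
    exact hs (LT_mono a hss.1 (ih z' hz' (by omega)))

/-- vertices -/
def Vert : Set (J → ℝ) := {z | Feas a b z ∧ (Tight a b z).card = Fintype.card J}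

lemma vert_bij (hbd : ∀ d : J → ℝ, d ≠ 0 → ∃ i, 0 < a i d)
    (hnd : ∀ z, Feas a b z → (Tight a b z).card ≤ Fintype.card J) {z : J → ℝ}
    (hz : z ∈ Vert a b) : Function.Bijective (LTm a (Tight a b z)) := by
  have hs := LT_surj a b hbd hnd (Fintype.card J) z hz.1 (by omega)
  refine ⟨(LinearMap.injective_iff_surjective_of_finrank_eq_finrank ?_).2 hs, hs⟩
  simp [hz.2]

lemma vert_finite (hbd : ∀ d : J → ℝ, d ≠ 0 → ∃ i, 0 < a i d)
    (hnd : ∀ z, Feas a b z → (Tight a b z).card ≤ Fintype.card J) : (Vert a b).Finite := by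
  refine Set.Finite.of_finite_image (f := Tight a b) (Set.toFinite _) ?_
  intro z hz w hw h
  apply (vert_bij a b hbd hnd hz).1
  ext ⟨i, hi⟩
  rw [LT_apply, LT_apply, (mem_Tight a b).1 hi]
  have := hi
  rw [show Tight a b z = Tight a b w from h] at this
  rw [(mem_Tight a b).1 this]

lemma edge_even (hbd : ∀ d : J → ℝ, d ≠ 0 → ∃ i, 0 < a i d)
    (hnd : ∀ z, Feas a b z → (Tight a b z).card ≤ Fintype.card J)
    (E : Finset (J × Bool)) (hE : E.card + 1 = Fintype.card J) (V : Finset (J → ℝ))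
    (hV : ∀ z, z ∈ V ↔ z ∈ Vert a b) :
    Even (V.filter fun z => E ⊆ Tight a b z).card := by
  rcases Finset.eq_empty_or_nonempty (V.filter fun z => E ⊆ Tight a b z) with h | ⟨v, hv⟩
  · simp [h]
  rw [Finset.mem_filter, hV] at hv
  obtain ⟨hvV, hvE⟩ := hv
  have hex : ∀ w ∈ Vert a b, E ⊆ Tight a b w → ∃ i, i ∉ E ∧ insert i E = Tight a b w := by
    intro w hw hwE
    have : (Tight a b w \ E).card = 1 := by
      rw [Finset.card_sdiff_of_subset hwE, hw.2]; omega
    obtain ⟨i, hi⟩ := Finset.card_eq_one.1 this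
    have hi' : i ∈ Tight a b w \ E := by simp [hi]
    rw [Finset.mem_sdiff] at hi'
    refine ⟨i, hi'.2, ?_⟩
    rw [Finset.insert_eq, ← hi, Finset.sdiff_union_of_subset hwE]
  obtain ⟨i0, hi0, hins⟩ := hex v hvV hvE
  have hbij := vert_bij a b hbd hnd hvV
  obtain ⟨d, hd⟩ := hbij.2 (fun i => if i.1 = i0 then -1 else 0)
  have hd0 : a i0 d = -1 := by
    have := congrFun hd ⟨i0, by rw [← hins]; simp⟩
    simpa [LT_apply] using this
  have hdE : ∀ i ∈ E, a i d = 0 := by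
    intro i hi
    have := congrFun hd ⟨i, hvE hi⟩
    rw [LT_apply] at this
    rw [this, if_neg]
    rintro h
    exact hi0 (h ▸ hi)
  have hdne : d ≠ 0 := by rintro rfl; simp at hd0
  obtain ⟨t, ht, hF, i1, hi1, hi1'⟩ := ray_lemma a b hbd hvV.1 hdne (by
    intro i hi
    rw [← hins, Finset.mem_insert] at hi
    rcases hi with rfl | hi
    · linarith
    · exact (hdE i hi).le)
  have hv'E : insert i1 E ⊆ Tight a b (v + t • d) := by
    intro i hi
    rw [mem_Tight]
    rw [Finset.mem_insert] at hi
    rcases hi with rfl | hi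
    · exact hi1'
    · simp [hdE i hi, (mem_Tight a b).1 (hvE hi)]
  have hi1E : i1 ∉ E := fun h => by rw [hdE i1 h] at hi1; exact lt_irrefl _ hi1
  have hv'V : v + t • d ∈ Vert a b := by
    refine ⟨hF, le_antisymm (hnd _ hF) ?_⟩
    have := Finset.card_le_card hv'E
    rw [Finset.card_insert_of_notMem hi1E] at this
    omega
  have : V.filter (fun z => E ⊆ Tight a b z) = {v, v + t • d} := by
    ext w
    simp only [Finset.mem_filter, hV, Finset.mem_insert, Finset.mem_singleton]
    constructor
    · rintro ⟨hw, hwE⟩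
      obtain ⟨s, hs⟩ : ∃ s, s = - a i0 (w - v) := ⟨_, rfl⟩
      have hwv : w - v = s • d := by
        apply hbij.1
        ext ⟨i, hi⟩
        rw [LT_apply, LT_apply]
        rw [← hins, Finset.mem_insert] at hi
        rcases hi with hi | hi
        · simp only [hi]
          rw [map_smul, hd0, hs]; simp
        · rw [map_sub, map_smul, hdE _ hi, (mem_Tight a b).1 (hwE hi), (mem_Tight a b).1 (hvE hi)]
          simp
      have hw' : w = v + s • d := by rw [← hwv]; abel
      have hvi0 : a i0 v = b i0 := (mem_Tight a b).1 (by rw [← hins]; simp)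
      have hs0 : 0 ≤ s := by
        have := hw.1 i0
        rw [map_sub] at hs
        linarith
      have hst : s ≤ t := by
        have h1 := hw.1 i1
        rw [hw'] at h1
        simp only [map_add, map_smul, smul_eq_mul] at h1 hi1'
        by_contra h
        nlinarith
      by_contra hcon
      push Not at hcon
      have hs0' : 0 < s := lt_of_le_of_ne hs0 (by rintro rfl; apply hcon.1; simpa using hw')
      have hst' : s < t := lt_of_le_of_ne hst (by rintro rfl; exact hcon.2 hw')
      obtain ⟨i, hi, hiT⟩ := hex w hw hwE
      have h1 : a i w = b i := (mem_Tight a b).1 (by rw [← hiT]; simp)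
      have h2 := hF i
      have h3 := hvV.1 i
      rw [hw'] at h1
      simp only [map_add, map_smul, smul_eq_mul] at h1 h2
      have h4 : a i d = 0 := by
        apply le_antisymm
        · by_contra h
          nlinarith
        · by_contra h
          nlinarith
      rw [h4] at h1
      have h5 : i ∈ Tight a b v := (mem_Tight a b).2 (by linarith)
      rw [← hins, Finset.mem_insert] at h5
      rcases h5 with rfl | h5
      · linarith
      · exact hi h5
    · rintro (rfl | rfl)
      · exact ⟨hvV, hvE⟩
      · exact ⟨hv'V, (Finset.subset_insert _ _).trans hv'E⟩
  rw [this, Finset.card_pair]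
  · exact even_two
  · intro h
    have : t • d = 0 := by simpa using h.symm
    rcases smul_eq_zero.1 this with h | h
    · linarith
    · exact hdne h

/-- complementary (completely labelled) points -/
def Comp : Set (J → ℝ) := {z | Feas a b z ∧ ∀ j, ∃ c, (j, c) ∈ Tight a b z}

lemma card_eq_sum_fiber (T : Finset (J × Bool)) :
    T.card = ∑ j, (Finset.univ.filter fun c => (j, c) ∈ T).card := by
  simp only [Finset.card_filter]
  rw [← Fintype.sum_prod_type']
  simp

lemma comp_even [Nonempty J] (hbd : ∀ d : J → ℝ, d ≠ 0 → ∃ i, 0 < a i d)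
    (hnd : ∀ z, Feas a b z → (Tight a b z).card ≤ Fintype.card J) :
    (Comp a b).Finite ∧ Even (Comp a b).ncard := by
  obtain ⟨k⟩ := ‹Nonempty J›
  have hfin := vert_finite a b hbd hnd
  set V := hfin.toFinset with hVdef
  have hV : ∀ z, z ∈ V ↔ z ∈ Vert a b := by simp [hVdef]
  let t : (J → ℝ) → J → ℕ := fun z j => (Finset.univ.filter fun c => (j, c) ∈ Tight a b z).card
  let c : (J → ℝ) → ℕ := fun z => ∏ j : {j // j ≠ k}, t z j
  have hsum : ∀ z, (Tight a b z).card = ∑ j, t z j := fun z => card_eq_sum_fiber _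
  have htle : ∀ z j, t z j ≤ 2 := by
    intro z j
    refine (Finset.card_le_univ _).trans ?_
    simp
  have htpos : ∀ z j, (∃ c, (j, c) ∈ Tight a b z) ↔ 1 ≤ t z j := by
    intro z j
    rw [Nat.succ_le_iff, Finset.card_pos]
    simp [Finset.Nonempty]
  have hsplit : ∀ z, ∑ j, t z j = t z k + ∑ j : {j // j ≠ k}, t z j := by
    intro z
    rw [Fintype.sum_eq_add_sum_compl k, ← Finset.sum_subtype]
    simp
  have hcardK : Fintype.card {j // j ≠ k} + 1 = Fintype.card J := by
    have h1 : 0 < Fintype.card J := Fintype.card_pos_iff.2 ⟨k⟩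
    have : Fintype.card {j // j ≠ k} = Fintype.card J - 1 := by
      simp [Fintype.card_subtype_compl]
    omega
  have hcomp : Comp a b = ((V.filter fun z => Odd (c z) : Finset (J → ℝ)) : Set (J → ℝ)) := by
    ext z
    simp only [Finset.coe_filter, Set.mem_ofPred_eq, hV]
    constructor
    · rintro ⟨hF, hz⟩
      have h1 : ∀ j, 1 ≤ t z j := fun j => (htpos z j).1 (hz j)
      have h2 := hnd z hF
      have h3 : ∑ j : J, 1 = ∑ j, t z j := by
        refine le_antisymm (Finset.sum_le_sum fun j _ => h1 j) ?_
        rw [← hsum]; simpa using h2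
      have h4 := (Finset.sum_eq_sum_iff_of_le (fun j _ => h1 j)).1 h3
      refine ⟨⟨hF, by rw [hsum, ← h3]; simp⟩, ?_⟩
      have : c z = 1 := Finset.prod_eq_one fun j _ => (h4 j (Finset.mem_univ _)).symm
      rw [this]; exact odd_one
    · rintro ⟨⟨hF, hcard⟩, hodd⟩
      have h1 : ∀ j, j ≠ k → t z j = 1 := by
        intro j hj
        have hdvd : t z j ∣ c z := Finset.dvd_prod_of_mem (fun j : {j // j ≠ k} => t z j)
          (Finset.mem_univ (⟨j, hj⟩ : {j // j ≠ k}))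
        have hodd' := Odd.of_dvd_nat hodd hdvd
        have := htle z j
        rcases hodd' with ⟨r, hr⟩
        omega
      have h2 : t z k = 1 := by
        have h3 := hsplit z
        rw [← hsum, hcard, Finset.sum_congr rfl (fun j _ => h1 j.1 j.2)] at h3
        simp only [Finset.sum_const, Finset.card_univ, smul_eq_mul, mul_one] at h3
        omega
      refine ⟨hF, fun j => (htpos z j).2 ?_⟩
      by_cases hj : j = k
      · rw [hj, h2]
      · rw [h1 j hj]
  refine ⟨by rw [hcomp]; exact Finset.finite_toSet _, ?_⟩
  rw [hcomp, Set.ncard_coe_finset]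
  rw [← Nat.not_odd_iff_even, ← Finset.odd_sum_iff_odd_card_odd, Nat.not_odd_iff_even]
  let E : ({j // j ≠ k} → Bool) → Finset (J × Bool) :=
    fun s => Finset.univ.image fun j => (j.1, s j)
  have hEcard : ∀ s, (E s).card + 1 = Fintype.card J := by
    intro s
    rw [Finset.card_image_of_injective, Finset.card_univ, hcardK]
    intro i j h
    exact Subtype.ext (congrArg Prod.fst h)
  have hc : ∀ z, c z = (Finset.univ.filter fun s => E s ⊆ Tight a b z).card := by
    intro z
    have : (Finset.univ.filter fun s => E s ⊆ Tight a b z) =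
        Fintype.piFinset (fun j : {j // j ≠ k} =>
          Finset.univ.filter fun c => (j.1, c) ∈ Tight a b z) := by
      ext s
      simp only [E, Finset.mem_filter, Finset.mem_univ, true_and, Fintype.mem_piFinset,
        Finset.image_subset_iff, forall_const]
    rw [this, Fintype.card_piFinset]
  have : ∑ z ∈ V, c z = ∑ s, (V.filter fun z => E s ⊆ Tight a b z).card := by
    simp only [hc, Finset.card_filter]
    rw [Finset.sum_comm]
  rw [this]
  exact Finset.even_sum _ fun s _ => edge_even a b hbd hnd (E s) (hEcard s) V hV

end Abstract

section Game

variable {ι κ : Type} [Fintype ι] [Fintype κ] (A B : Matrix ι κ ℝ)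

/-- constraint functionals of the best response polytope -/
def gA : (ι ⊕ κ) × Bool → ((ι ⊕ κ) → ℝ) →ₗ[ℝ] ℝ
  | (i, false) => - LinearMap.proj i
  | (i, true) => (LinearMap.proj i).comp (Matrix.fromBlocks 0 A Bᵀ 0).mulVecLin

/-- right-hand sides -/
def gB : (ι ⊕ κ) × Bool → ℝ
  | (_, false) => 0
  | (_, true) => 1

lemma gA_l0 (x : ι → ℝ) (y : κ → ℝ) (i : ι) :
    gA A B (Sum.inl i, false) (Sum.elim x y) = - x i := by simp [gA]
lemma gA_r0 (x : ι → ℝ) (y : κ → ℝ) (i : κ) :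
    gA A B (Sum.inr i, false) (Sum.elim x y) = - y i := by simp [gA]
lemma gA_l1 (x : ι → ℝ) (y : κ → ℝ) (i : ι) :
    gA A B (Sum.inl i, true) (Sum.elim x y) = (A *ᵥ y) i := by
  simp [gA, Matrix.fromBlocks_mulVec]
lemma gA_r1 (x : ι → ℝ) (y : κ → ℝ) (i : κ) :
    gA A B (Sum.inr i, true) (Sum.elim x y) = (Bᵀ *ᵥ x) i := by
  simp [gA, Matrix.fromBlocks_mulVec]

lemma feas_iff (x : ι → ℝ) (y : κ → ℝ) : Feas (gA A B) gB (Sum.elim x y) ↔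
    (∀ i, 0 ≤ x i) ∧ (∀ j, 0 ≤ y j) ∧ (∀ i, (A *ᵥ y) i ≤ 1) ∧ (∀ j, (Bᵀ *ᵥ x) j ≤ 1) := by
  simp only [Feas, Prod.forall, Bool.forall_bool, Sum.forall, gA_l0, gA_r0, gA_l1, gA_r1, gB,
    Left.neg_nonpos_iff]
  constructor
  · rintro ⟨h1, h2⟩
    exact ⟨fun i => (h1 i).1, fun i => (h2 i).1, fun i => (h1 i).2, fun i => (h2 i).2⟩
  · rintro ⟨h1, h2, h3, h4⟩
    exact ⟨fun i => ⟨h1 i, h3 i⟩, fun i => ⟨h2 i, h4 i⟩⟩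

lemma comp_iff (x : ι → ℝ) (y : κ → ℝ) : Sum.elim x y ∈ Comp (gA A B) gB ↔
    ((∀ i, 0 ≤ x i) ∧ (∀ j, 0 ≤ y j) ∧ (∀ i, (A *ᵥ y) i ≤ 1) ∧ (∀ j, (Bᵀ *ᵥ x) j ≤ 1)) ∧
    (∀ i, x i = 0 ∨ (A *ᵥ y) i = 1) ∧ (∀ j, y j = 0 ∨ (Bᵀ *ᵥ x) j = 1) := by
  simp only [Comp, Set.mem_ofPred_eq, feas_iff, mem_Tight, Bool.exists_bool, Sum.forall,
    gA_l0, gA_r0, gA_l1, gA_r1, gB, neg_eq_zero]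

lemma card_tight (x : ι → ℝ) (y : κ → ℝ) : (Tight (gA A B) gB (Sum.elim x y)).card =
    ((Finset.univ.filter fun i => x i = 0).card +
      (Finset.univ.filter fun j => (Bᵀ *ᵥ x) j = 1).card) +
    ((Finset.univ.filter fun j => y j = 0).card +
      (Finset.univ.filter fun i => (A *ᵥ y) i = 1).card) := by
  rw [Tight, Finset.card_filter, Fintype.sum_prod_type, Fintype.sum_sum_type]
  simp only [Finset.card_filter, Fintype.sum_bool, gA_l0, gA_r0, gA_l1, gA_r1, gB, neg_eq_zero, Finset.sum_add_distrib]
  omega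

lemma sum_pos_of_ne {x : ι → ℝ} (hx : ∀ i, 0 ≤ x i) (h : x ≠ 0) : 0 < ∑ i, x i := by
  refine lt_of_le_of_ne (Finset.sum_nonneg fun i _ => hx i) fun h0 => h ?_
  funext i
  exact (Finset.sum_eq_zero_iff_of_nonneg (fun i _ => hx i)).1 h0.symm i (Finset.mem_univ i)

lemma mixed_normalize {x : ι → ℝ} (hx : ∀ i, 0 ≤ x i) (h : x ≠ 0) :
    IsMixed ((∑ i, x i)⁻¹ • x) := by
  have hs := sum_pos_of_ne hx h
  refine ⟨fun i => mul_nonneg (inv_nonneg.2 hs.le) (hx i), ?_⟩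
  simp only [Pi.smul_apply, smul_eq_mul, ← Finset.mul_sum]
  exact inv_mul_cancel₀ hs.ne'

/-- nondegeneracy in one of the two polytopes -/
lemma nd_half (M : Matrix κ ι ℝ)
    (h : ∀ x : ι → ℝ, IsMixed x →
      (Finset.univ.filter fun j => ∀ k, (M *ᵥ x) k ≤ (M *ᵥ x) j).card ≤ (supp x).card)
    (x : ι → ℝ) (hx : ∀ i, 0 ≤ x i) (hM : ∀ j, (M *ᵥ x) j ≤ 1) :
    (Finset.univ.filter fun i => x i = 0).card +
      (Finset.univ.filter fun j => (M *ᵥ x) j = 1).card ≤ Fintype.card ι := by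
  by_cases h0 : x = 0
  · subst h0
    simp
  have hs := sum_pos_of_ne hx h0
  have h1 := h _ (mixed_normalize hx h0)
  have h2 : (Finset.univ.filter fun j => (M *ᵥ x) j = 1).card ≤
      (Finset.univ.filter fun j => ∀ k, (M *ᵥ ((∑ i, x i)⁻¹ • x)) k ≤
        (M *ᵥ ((∑ i, x i)⁻¹ • x)) j).card := by
    apply Finset.card_le_card
    intro j
    simp only [Finset.mem_filter, Finset.mem_univ, true_and, Matrix.mulVec_smul, Pi.smul_apply,
      smul_eq_mul]
    intro hj k
    rw [hj]
    exact mul_le_mul_of_nonneg_left (hM k) (inv_nonneg.2 hs.le)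
  have h3 : supp ((∑ i, x i)⁻¹ • x) = Finset.univ.filter fun i => ¬ x i = 0 := by
    ext i
    simp only [supp, Finset.mem_filter, Finset.mem_univ, true_and, Pi.smul_apply, smul_eq_mul]
    constructor
    · intro h h'
      rw [h', mul_zero] at h
      exact lt_irrefl _ h
    · intro h
      exact mul_pos (inv_pos.2 hs) (lt_of_le_of_ne (hx i) (Ne.symm h))
  rw [h3] at h1
  have h4 := Finset.card_filter_add_card_filter_not (s := (Finset.univ : Finset ι)) (fun i => x i = 0)
  rw [Finset.card_univ] at h4
  omega

lemma mulVec_pos_zero [Nonempty ι] (M : Matrix ι κ ℝ) (hM : ∀ i j, 0 < M i j) (y : κ → ℝ)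
    (hy : ∀ j, 0 ≤ y j) (h : ∀ i, (M *ᵥ y) i ≤ 0) : y = 0 := by
  obtain ⟨i⟩ := ‹Nonempty ι›
  have h0 : ∀ j ∈ Finset.univ, 0 ≤ M i j * y j := fun j _ => mul_nonneg (hM i j).le (hy j)
  have h1 : ∑ j, M i j * y j = 0 := le_antisymm (h i) (Finset.sum_nonneg h0)
  funext j
  have := (Finset.sum_eq_zero_iff_of_nonneg h0).1 h1 j (Finset.mem_univ j)
  exact (mul_eq_zero.1 this).resolve_left (hM i j).ne'

lemma mixed_dot_le {x u : ι → ℝ} {c : ℝ} (hx : IsMixed x) (h : ∀ i, u i ≤ c) : x ⬝ᵥ u ≤ c := by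
  calc x ⬝ᵥ u = ∑ i, x i * u i := rfl
    _ ≤ ∑ i, x i * c := Finset.sum_le_sum fun i _ => mul_le_mul_of_nonneg_left (h i) (hx.1 i)
    _ = c := by rw [← Finset.sum_mul, hx.2, one_mul]

lemma mixed_dot_eq {x u : ι → ℝ} {c : ℝ} (hx : IsMixed x) (h : ∀ i, x i = 0 ∨ u i = c) :
    x ⬝ᵥ u = c := by
  calc x ⬝ᵥ u = ∑ i, x i * u i := rfl
    _ = ∑ i, x i * c := Finset.sum_congr rfl fun i _ => by
        rcases h i with h | h <;> rw [h]
        simp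
    _ = c := by rw [← Finset.sum_mul, hx.2, one_mul]

lemma mixed_single (i : ι) : IsMixed (Pi.single i (1 : ℝ)) := by
  refine ⟨fun j => ?_, by simp⟩
  by_cases h : j = i
  · subst h; simp
  · simp [h]

/-- best response condition -/
lemma best_iff {x : ι → ℝ} (hx : IsMixed x) (u : ι → ℝ) :
    (∀ x' : ι → ℝ, IsMixed x' → x' ⬝ᵥ u ≤ x ⬝ᵥ u) ↔
      ∃ c, (∀ i, u i ≤ c) ∧ (∀ i, x i = 0 ∨ u i = c) := by
  constructor
  · intro h
    have h1 : ∀ i, u i ≤ x ⬝ᵥ u := fun i => by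
      simpa using h _ (mixed_single i)
    refine ⟨x ⬝ᵥ u, h1, fun i => ?_⟩
    have h0 : ∀ j ∈ Finset.univ, 0 ≤ x j * (x ⬝ᵥ u - u j) :=
      fun j _ => mul_nonneg (hx.1 j) (by linarith [h1 j])
    have h2 : ∑ j, x j * (x ⬝ᵥ u - u j) = 0 := by
      simp only [mul_sub, Finset.sum_sub_distrib, ← Finset.sum_mul, hx.2]
      simp [dotProduct]
    have := (Finset.sum_eq_zero_iff_of_nonneg h0).1 h2 i (Finset.mem_univ i)
    rcases mul_eq_zero.1 this with h | h
    · exact Or.inl h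
    · exact Or.inr (by linarith)
  · rintro ⟨c, h1, h2⟩ x' hx'
    rw [mixed_dot_eq hx h2]
    exact mixed_dot_le hx' h1

lemma nash_iff (x : ι → ℝ) (y : κ → ℝ) : IsNash A B x y ↔ IsMixed x ∧ IsMixed y ∧
    (∃ c, (∀ i, (A *ᵥ y) i ≤ c) ∧ (∀ i, x i = 0 ∨ (A *ᵥ y) i = c)) ∧
    (∃ c, (∀ j, (Bᵀ *ᵥ x) j ≤ c) ∧ (∀ j, y j = 0 ∨ (Bᵀ *ᵥ x) j = c)) := by
  unfold IsNash
  refine and_congr_right fun hx => and_congr_right fun hy => ?_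
  rw [best_iff hx, ← best_iff hy]
  have : ∀ y' : κ → ℝ, x ⬝ᵥ (B *ᵥ y') = y' ⬝ᵥ (Bᵀ *ᵥ x) := by
    intro y'
    rw [Matrix.mulVec_transpose, Matrix.dotProduct_mulVec, dotProduct_comm]
  simp only [this]

lemma mixed_ne_zero {x : ι → ℝ} (hx : IsMixed x) : x ≠ 0 := by
  rintro rfl
  simpa using hx.2

lemma odd_of_pos [Nonempty ι] [Nonempty κ] (hA : ∀ i j, 0 < A i j) (hB : ∀ i j, 0 < B i j)
    (hnd : Nondegenerate A B) :
    Set.Finite {p : (ι → ℝ) × (κ → ℝ) | IsNash A B p.1 p.2} ∧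
    Odd {p : (ι → ℝ) × (κ → ℝ) | IsNash A B p.1 p.2}.ncard := by
  have hel : ∀ z : ι ⊕ κ → ℝ, ∃ x y, z = Sum.elim x y := fun z =>
    ⟨z ∘ Sum.inl, z ∘ Sum.inr, (Sum.elim_comp_inl_inr z).symm⟩
  have hBt : ∀ j i, 0 < Bᵀ j i := fun j i => hB i j
  obtain ⟨hfin, heven⟩ := comp_even (gA A B) gB (by
    intro d hd
    obtain ⟨x, y, rfl⟩ := hel d
    by_contra hcon
    push Not at hcon
    have hx : ∀ i, 0 ≤ x i := fun i => by
      have := hcon (Sum.inl i, false); rw [gA_l0] at this; linarith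
    have hy : ∀ i, 0 ≤ y i := fun i => by
      have := hcon (Sum.inr i, false); rw [gA_r0] at this; linarith
    have hy0 := mulVec_pos_zero A hA y hy fun i => by
      have := hcon (Sum.inl i, true); rwa [gA_l1] at this
    have hx0 := mulVec_pos_zero Bᵀ hBt x hx fun i => by
      have := hcon (Sum.inr i, true); rwa [gA_r1] at this
    apply hd
    rw [hx0, hy0]
    ext i
    rcases i with i | i <;> rfl) (by
    intro z hz
    obtain ⟨x, y, rfl⟩ := hel z
    rw [feas_iff] at hz
    obtain ⟨h1, h2, h3, h4⟩ := hz
    rw [card_tight, Fintype.card_sum]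
    exact Nat.add_le_add (nd_half Bᵀ hnd.1 x h1 h4) (nd_half A hnd.2 y h2 h3))
  set N := {p : (ι → ℝ) × (κ → ℝ) | IsNash A B p.1 p.2} with hN
  let f : (ι → ℝ) × (κ → ℝ) → (ι ⊕ κ → ℝ) := fun p =>
    Sum.elim ((p.2 ⬝ᵥ (Bᵀ *ᵥ p.1))⁻¹ • p.1) ((p.1 ⬝ᵥ (A *ᵥ p.2))⁻¹ • p.2)
  -- positive payoffs
  have hpos : ∀ {x : ι → ℝ} {y : κ → ℝ} {c : ℝ}, IsMixed y → (∀ i, (A *ᵥ y) i ≤ c) → 0 < c := by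
    intro x y c hy hc
    by_contra h
    exact mixed_ne_zero hy (mulVec_pos_zero A hA y hy.1 fun i => (hc i).trans (not_lt.1 h))
  have hpos' : ∀ {x : ι → ℝ} {c : ℝ}, IsMixed x → (∀ i, (Bᵀ *ᵥ x) i ≤ c) → 0 < c := by
    intro x c hy hc
    by_contra h
    exact mixed_ne_zero hy (mulVec_pos_zero Bᵀ hBt x hy.1 fun i => (hc i).trans (not_lt.1 h))
  have hnp : ∀ p ∈ N, 0 < p.2 ⬝ᵥ (Bᵀ *ᵥ p.1) ∧ 0 < p.1 ⬝ᵥ (A *ᵥ p.2) := by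
    rintro ⟨x, y⟩ hp
    obtain ⟨hx, hy, ⟨c, hc1, hc2⟩, ⟨c', hc1', hc2'⟩⟩ := (nash_iff A B x y).1 hp
    simp only
    rw [mixed_dot_eq hx hc2, mixed_dot_eq hy hc2']
    exact ⟨hpos' hx hc1', hpos (x := x) hy hc1⟩
  have hsc : ∀ {τ : Type} [Fintype τ] {x x' : τ → ℝ} {c c' : ℝ}, IsMixed x → IsMixed x' →
      0 < c → 0 < c' → c⁻¹ • x = c'⁻¹ • x' → x = x' := by
    intro τ _ x x' c c' hx hx' hc hc' h
    have h1 : c⁻¹ = c'⁻¹ := by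
      have := congrArg (fun u : τ → ℝ => ∑ i, u i) h
      simpa [← Finset.mul_sum, hx.2, hx'.2] using this
    rw [h1] at h
    exact smul_right_injective _ (inv_ne_zero hc'.ne') h
  have hinj : Set.InjOn f N := by
    rintro ⟨x, y⟩ hp ⟨x', y'⟩ hp' h
    obtain ⟨h1, h2⟩ := hnp _ hp
    obtain ⟨h1', h2'⟩ := hnp _ hp'
    have e1 := congrArg (fun z => z ∘ Sum.inl) h
    have e2 := congrArg (fun z => z ∘ Sum.inr) h
    simp only [f, Sum.elim_comp_inl, Sum.elim_comp_inr] at e1 e2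
    exact Prod.ext (hsc hp.1 hp'.1 h1 h1' e1) (hsc hp.2.1 hp'.2.1 h2 h2' e2)
  have himg : Comp (gA A B) gB = insert 0 (f '' N) := by
    ext z
    constructor
    · intro hz
      obtain ⟨x, y, rfl⟩ := hel z
      obtain ⟨⟨hx, hy, hAy, hBx⟩, hcx, hcy⟩ := (comp_iff A B x y).1 hz
      have hz0 : x = 0 ∨ y = 0 → Sum.elim x y ∈ insert 0 (f '' N) := by
        intro h
        have hx0 : x = 0 := by
          rcases h with h | h
          · exact h
          · subst h; funext i; simpa using hcx i
        have hy0 : y = 0 := by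
          subst hx0; funext i; simpa using hcy i
        left
        rw [hx0, hy0]
        ext i
        rcases i with i | i <;> rfl
      by_cases hx0 : x = 0
      · exact hz0 (Or.inl hx0)
      by_cases hy0 : y = 0
      · exact hz0 (Or.inr hy0)
      right
      have hsx := sum_pos_of_ne hx hx0
      have hsy := sum_pos_of_ne hy hy0
      have hmx := mixed_normalize hx hx0
      have hmy := mixed_normalize hy hy0
      have c1 : ∀ i, ((∑ i, x i)⁻¹ • x) i = 0 ∨
          (A *ᵥ ((∑ i, y i)⁻¹ • y)) i = (∑ i, y i)⁻¹ := by
        intro i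
        rcases hcx i with h | h
        · left; simp [h]
        · right; simp [Matrix.mulVec_smul, h]
      have c2 : ∀ i, ((∑ i, y i)⁻¹ • y) i = 0 ∨
          (Bᵀ *ᵥ ((∑ i, x i)⁻¹ • x)) i = (∑ i, x i)⁻¹ := by
        intro i
        rcases hcy i with h | h
        · left; simp [h]
        · right; simp [Matrix.mulVec_smul, h]
      refine ⟨((∑ i, x i)⁻¹ • x, (∑ i, y i)⁻¹ • y), ?_, ?_⟩
      · refine (nash_iff A B _ _).2 ⟨hmx, hmy, ⟨_, fun i => ?_, c1⟩, ⟨_, fun i => ?_, c2⟩⟩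
        · rw [Matrix.mulVec_smul, Pi.smul_apply, smul_eq_mul]
          exact mul_le_of_le_one_right (inv_nonneg.2 hsy.le) (hAy i)
        · rw [Matrix.mulVec_smul, Pi.smul_apply, smul_eq_mul]
          exact mul_le_of_le_one_right (inv_nonneg.2 hsx.le) (hBx i)
      · simp only [f]
        rw [mixed_dot_eq hmx c1, mixed_dot_eq hmy c2, inv_inv, inv_inv,
          smul_inv_smul₀ hsx.ne', smul_inv_smul₀ hsy.ne']
    · rintro (rfl | ⟨⟨x, y⟩, hp, rfl⟩)
      · have : (0 : ι ⊕ κ → ℝ) = Sum.elim (0 : ι → ℝ) (0 : κ → ℝ) := by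
          ext i
          rcases i with i | i <;> rfl
        rw [this, comp_iff]
        simp
      · obtain ⟨h1, h2⟩ := hnp _ hp
        obtain ⟨hx, hy, ⟨c, hc1, hc2⟩, ⟨c', hc1', hc2'⟩⟩ := (nash_iff A B x y).1 hp
        simp only [f] at h1 h2 ⊢
        rw [mixed_dot_eq hx hc2] at h2 ⊢
        rw [mixed_dot_eq hy hc2'] at h1 ⊢
        rw [comp_iff]
        simp only [Matrix.mulVec_smul, Pi.smul_apply, smul_eq_mul]
        refine ⟨⟨fun i => mul_nonneg (inv_nonneg.2 h1.le) (hx.1 i),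
          fun i => mul_nonneg (inv_nonneg.2 h2.le) (hy.1 i), fun i => ?_, fun i => ?_⟩,
          fun i => ?_, fun i => ?_⟩
        · rw [inv_mul_le_iff₀ h2, mul_one]; exact hc1 i
        · rw [inv_mul_le_iff₀ h1, mul_one]; exact hc1' i
        · rcases hc2 i with h | h
          · left; simp [h]
          · right; rw [h, inv_mul_cancel₀ h2.ne']
        · rcases hc2' i with h | h
          · left; simp [h]
          · right; rw [h, inv_mul_cancel₀ h1.ne']
  have h0 : (0 : ι ⊕ κ → ℝ) ∉ f '' N := by
    rintro ⟨⟨x, y⟩, hp, h⟩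
    obtain ⟨h1, h2⟩ := hnp _ hp
    have e1 := congrArg (fun z => z ∘ Sum.inl) h
    simp only [f, Sum.elim_comp_inl] at e1
    have e2 : (y ⬝ᵥ (Bᵀ *ᵥ x))⁻¹ • x = 0 := e1
    rcases smul_eq_zero.1 e2 with h | h
    · exact h1.ne' (inv_eq_zero.1 h)
    · exact mixed_ne_zero hp.1 h
  have hfimg : (f '' N).Finite := hfin.subset (by rw [himg]; exact Set.subset_insert _ _)
  refine ⟨Set.Finite.of_finite_image hfimg hinj, ?_⟩
  rw [himg, Set.ncard_insert_of_notMem h0 hfimg, Set.InjOn.ncard_image hinj] at heven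
  rcases Nat.even_or_odd N.ncard with h | h
  · exact absurd heven (Nat.not_even_iff_odd.2 h.add_one)
  · exact h

lemma shift_mulVec (M : Matrix ι κ ℝ) (c : ℝ) {y : κ → ℝ} (hy : IsMixed y) (i : ι) :
    ((M + Matrix.of fun _ _ => c) *ᵥ y) i = (M *ᵥ y) i + c := by
  rw [Matrix.add_mulVec, Pi.add_apply]
  congr 1
  simp [Matrix.mulVec, dotProduct, ← Finset.mul_sum, hy.2]

lemma shift_ex (c : ℝ) (x u u' : ι → ℝ) (h : ∀ i, u' i = u i + c) :
    (∃ d, (∀ i, u' i ≤ d) ∧ (∀ i, x i = 0 ∨ u' i = d)) ↔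
    (∃ d, (∀ i, u i ≤ d) ∧ (∀ i, x i = 0 ∨ u i = d)) := by
  constructor
  · rintro ⟨d, h1, h2⟩
    refine ⟨d - c, fun i => by linarith [h1 i, h i], fun i => ?_⟩
    exact (h2 i).imp id fun h' => by linarith [h i]
  · rintro ⟨d, h1, h2⟩
    refine ⟨d + c, fun i => by linarith [h1 i, h i], fun i => ?_⟩
    exact (h2 i).imp id fun h' => by linarith [h i]

lemma exists_shift (M : Matrix ι κ ℝ) : ∃ c : ℝ, ∀ i j, 0 < (M + Matrix.of fun _ _ => c : Matrix ι κ ℝ) i j := by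
  refine ⟨1 + ∑ p : ι × κ, |M p.1 p.2|, fun i j => ?_⟩
  have h1 := Finset.single_le_sum (f := fun p : ι × κ => |M p.1 p.2|)
    (fun p _ => abs_nonneg _) (Finset.mem_univ (i, j))
  have h2 := neg_abs_le (M i j)
  simp only [Matrix.add_apply, Matrix.of_apply] at h1 ⊢
  linarith

lemma odd_general [Nonempty ι] [Nonempty κ] (hnd : Nondegenerate A B) :
    Set.Finite {p : (ι → ℝ) × (κ → ℝ) | IsNash A B p.1 p.2} ∧
    Odd {p : (ι → ℝ) × (κ → ℝ) | IsNash A B p.1 p.2}.ncard := by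
  obtain ⟨c, hc⟩ := exists_shift A
  obtain ⟨c', hc'⟩ := exists_shift B
  have hA := fun {y : κ → ℝ} (hy : IsMixed y) => shift_mulVec A c hy
  have hB : ∀ {x : ι → ℝ}, IsMixed x → ∀ j,
      ((B + Matrix.of fun _ _ => c')ᵀ *ᵥ x) j = (Bᵀ *ᵥ x) j + c' := by
    intro x hx j
    exact shift_mulVec Bᵀ c' hx j
  have h := odd_of_pos _ _ hc hc' (by
    constructor
    · intro x hx
      convert hnd.1 x hx using 2
      simp only [bestresp2, hB hx, add_le_add_iff_right]
    · intro y hy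
      convert hnd.2 y hy using 2
      simp only [bestresp1, hA hy, add_le_add_iff_right])
  have e : {p : (ι → ℝ) × (κ → ℝ) | IsNash (A + Matrix.of fun _ _ => c)
      (B + Matrix.of fun _ _ => c') p.1 p.2} = {p | IsNash A B p.1 p.2} := by
    ext ⟨x, y⟩
    simp only [Set.mem_ofPred_eq, nash_iff]
    refine and_congr_right fun hx => and_congr_right fun hy => ?_
    rw [shift_ex c x _ _ (hA hy), shift_ex c' y _ _ (hB hx)]
  rwa [e] at h

end Game

/-- Any nondegenerate bimatrix game has a finite and odd number of Nash equilibria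
(in particular at least one Nash equilibrium exists). -/
theorem odd_number_of_nash_equilibria {m n : ℕ} (hm : 0 < m) (hn : 0 < n)
    (A B : Matrix (Fin m) (Fin n) ℝ) (hnd : Nondegenerate A B) :
    Set.Finite {p : (Fin m → ℝ) × (Fin n → ℝ) | IsNash A B p.1 p.2} ∧
    Odd {p : (Fin m → ℝ) × (Fin n → ℝ) | IsNash A B p.1 p.2}.ncard := by
  have : Nonempty (Fin m) := ⟨⟨0, hm⟩⟩
  have : Nonempty (Fin n) := ⟨⟨0, hn⟩⟩
  exact odd_general A B hnd
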